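/- Assume q ≡ 1 (mod 4). Let p and r be distinct internal points with r lying on the passant line p^⊥. Then |H_{p,r} ∩ {1}| = 1, and |H_{p,r} ∩ C| is even for each of the following class sets C: C = [4]; C = [θ] for any nonzero square θ ≠ 4 with θ-4 a nonzero square; C = [π] for any nonzero square π ≠ 4 with π-4 a nonsquare. (In particular, among these class sets, |H_{p,r} ∩ C| is odd only for C = {1}.) -/

import Mathlib

/-!
The matrices of `H` are the symmetric squares `symSq a b c d` of the matrices `[a b; c d]` of
determinant one, acting on binary quadratic forms, and `T (symSq g) = (tr g)²`.

For a point `p = (x, y, z)` with `N = x z - y² ≠ 0` let `P = [y z; -x -y]`. Since `P² = -N`, the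
matrix `halfTurn p = N⁻¹ • symSq P` is an involution; it fixes `p`, and it is `-1` on `p^⊥`.
Let `r ∈ p^⊥`. Conjugation by `halfTurn p` and by `halfTurn r` are then commuting involutions which
preserve `H`, the trace, and the condition `r ∈ (p^⊥)^h`. So a Klein four-group acts on
`H_{p,r} ∩ C`, and the size of this set has the parity of the number of common fixed points.

If `symSq g` is fixed by both conjugations and `tr g ≠ 0`, then `g` commutes with the matrices `P`
and `R` of `p` and `r` (`commute_of_fixed`). These two do not commute with each other, so `g` is
scalar, and `symSq g = 1` (`eq_one_of_fixed`). Hence an element of `H` other than `1` with nonzero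
`T` is never a common fixed point, and all the counts in question are even.
-/

open scoped Classical

noncomputable section

namespace ConicPaper

variable (K : Type) [Field K] [Fintype K]

/-- Points (and also lines, via homogeneous coordinates) of `PG(2,q)`. -/
abbrev Pt := Projectivization K (Fin 3 → K)

instance : Fintype (Pt K) := @Fintype.ofFinite _ (Quotient.finite _)

/-- `a` is a nonsquare in `K`. -/
def Nonsq (a : K) : Prop := ¬ IsSquare a

/-- The quadratic form `Q(x0,x1,x2) = x1^2 - x0*x2` defining the conic. -/
def Qf (v : Fin 3 → K) : K := v 1 ^ 2 - v 0 * v 2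

/-- A point is internal when `Q` of (a representative of) it is a nonsquare. -/
def Internal (p : Pt K) : Prop := Nonsq K (Qf K p.rep)

/-- A point is external when `Q` of it is a nonzero square. -/
def External (p : Pt K) : Prop := Qf K p.rep ≠ 0 ∧ IsSquare (Qf K p.rep)

/-- The point `p` lies on the line `ℓ = [b0,b1,b2]`. -/
def OnL (p ℓ : Pt K) : Prop :=
  p.rep 0 * ℓ.rep 0 + p.rep 1 * ℓ.rep 1 + p.rep 2 * ℓ.rep 2 = 0

/-- Discriminant `b1^2 - 4 b0 b2` of a line. -/
def lineDisc (ℓ : Pt K) : K := ℓ.rep 1 ^ 2 - 4 * ℓ.rep 0 * ℓ.rep 2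

/-- A line is a passant when its discriminant is a nonsquare. -/
def Passant (ℓ : Pt K) : Prop := Nonsq K (lineDisc K ℓ)

/-- A line is a secant when its discriminant is a nonzero square. -/
def Secant (ℓ : Pt K) : Prop := lineDisc K ℓ ≠ 0 ∧ IsSquare (lineDisc K ℓ)

/-- The incidence pairing of the vector `w` with the polar line
`p^⊥ = [z, -2y, x]` of the point `p = (x,y,z)`. -/
def perpDot (p : Pt K) (w : Fin 3 → K) : K :=
  w 0 * p.rep 2 + w 1 * (-2 * p.rep 1) + w 2 * p.rep 0

/-- The point `r` lies on the passant line `p^⊥`. -/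
def OnPerp (p r : Pt K) : Prop := perpDot K p r.rep = 0

/-- The (finite) set `I` of internal points, as a type. -/
abbrev Ipts := {p : Pt K // Internal K p}

instance : Fintype (Ipts K) := Fintype.ofFinite _

/-- The action of a (nonsingular) matrix `M` on points of `PG(2,q)`:
`p ↦ p·M`.  (If `p.rep ᵥ* M` were zero -- impossible for invertible `M` --
we return `p`, making the function total.) -/
def actPt (M : Matrix (Fin 3) (Fin 3) K) (p : Pt K) : Pt K :=
  if h : Matrix.vecMul p.rep M ≠ 0 then Projectivization.mk K (Matrix.vecMul p.rep M) h else p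

/-- The group `H ≅ PSL(2,q)`, given by its set of matrix representatives. -/
def Hset : Set (Matrix (Fin 3) (Fin 3) K) :=
  {M | ∃ a b c d : K, a * d - b * c = 1 ∧
    M = !![a^2, a*b, b^2; 2*a*c, a*d + b*c, 2*b*d; c^2, c*d, d^2]}

/-- The class set `{g ∈ H : T(g) = tr(g) + 1 = s}` for `s ∈ F_q`. -/
def classOf (s : K) : Set (Matrix (Fin 3) (Fin 3) K) :=
  {g | g ∈ Hset K ∧ Matrix.trace g + 1 = s}

/-- The class set `[4] = {g ∈ H : T(g) = 4, g ≠ 1}`. -/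
def class4 : Set (Matrix (Fin 3) (Fin 3) K) :=
  {g | g ∈ Hset K ∧ Matrix.trace g + 1 = 4 ∧ g ≠ 1}

/-- `H_{p,r} = {h ∈ H : r lies on the line (p^⊥)^h}`; the line `(p^⊥)^h` has
coordinate vector `h⁻¹ ⬝ (p^⊥)`, so `r` lies on it iff
`perpDot p (r.rep ᵥ* h⁻¹) = 0`. -/
def HprSet (p r : Pt K) : Set (Matrix (Fin 3) (Fin 3) K) :=
  {M | M ∈ Hset K ∧ perpDot K p (Matrix.vecMul r.rep M⁻¹) = 0}

/-! ### Parity from two commuting involutions -/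

/-- A finite set carrying two commuting involutions without a common fixed point has even
cardinality: `x ↦ σ x` where `σ` moves `x`, and `x ↦ τ x` elsewhere, is a fixed-point-free
involution. -/
theorem even_ncard_of_two_involutions {α : Type*} [Finite α] (S : Set α) (σ τ : α → α)
    (hσ : ∀ x, σ (σ x) = x) (hτ : ∀ x, τ (τ x) = x) (hc : ∀ x, σ (τ x) = τ (σ x))
    (hσS : ∀ x ∈ S, σ x ∈ S) (hτS : ∀ x ∈ S, τ x ∈ S)
    (hfix : ∀ x ∈ S, σ x = x → τ x = x → False) : Even S.ncard := by
  have := Fintype.ofFinite α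
  rw [Set.ncard_eq_toFinset_card' S, ← ZMod.natCast_eq_zero_iff_even, Finset.cast_card]
  refine Finset.sum_involution (fun x _ => if σ x = x then τ x else σ x) ?_ ?_ ?_ ?_
  · intro x _
    exact CharTwo.add_self_eq_zero 1
  · intro x hx _
    have hx' : x ∈ S := by simpa using hx
    have := hfix x hx'
    grind
  · intro x hx
    have hx' : x ∈ S := by simpa using hx
    have h1 := hσS x hx'
    have h2 := hτS x hx'
    simp only [Set.mem_toFinset]
    grind
  · intro x hx
    have := hσ x
    have := hτ x
    have := hc x
    grind

/-! ### Symmetric squares and half-turns -/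

/-- The symmetric square of `[a b; c d]`: its action on the quadratic forms
`a0 X² + 2 a1 XY + a2 Y²` by substitution. -/
def symSq {K : Type} [Field K] (a b c d : K) : Matrix (Fin 3) (Fin 3) K :=
  !![a^2, a*b, b^2; 2*a*c, a*d + b*c, 2*b*d; c^2, c*d, d^2]

theorem symSq_mul {K : Type} [Field K] (a b c d a' b' c' d' : K) :
    symSq a b c d * symSq a' b' c' d' =
      symSq (a*a' + b*c') (a*b' + b*d') (c*a' + d*c') (c*b' + d*d') := by
  ext i j
  fin_cases i <;> fin_cases j <;>
    simp [symSq, Matrix.mul_apply, Fin.sum_univ_three] <;> ring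

theorem smul_symSq {K : Type} [Field K] (t a b c d : K) :
    t^2 • symSq a b c d = symSq (t*a) (t*b) (t*c) (t*d) := by
  ext i j
  fin_cases i <;> fin_cases j <;> simp [symSq] <;> ring

theorem symSq_one {K : Type} [Field K] : symSq (1 : K) 0 0 1 = 1 := by
  ext i j
  fin_cases i <;> fin_cases j <;> simp [symSq]

/-- The determinant `x z - y²` of the symmetric matrix of the form `v = (x, y, z)`. -/
def nrm {K : Type} [Field K] (v : Fin 3 → K) : K := v 0 * v 2 - v 1 ^ 2

/-- The involution of the plane which fixes `v` and acts as `-1` on `v^⊥`. -/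
def halfTurn {K : Type} [Field K] (v : Fin 3 → K) : Matrix (Fin 3) (Fin 3) K :=
  (nrm v)⁻¹ • symSq (v 1) (v 2) (-v 0) (-v 1)

/-- The symmetric bilinear form with `bil v v = 2 * nrm v`; `bil v w = 0` says that the point `w`
lies on `v^⊥`, so that `perpDot K p = bil p.rep`. -/
def bil {K : Type} [Field K] (v w : Fin 3 → K) : K :=
  w 0 * v 2 + w 1 * (-2 * v 1) + w 2 * v 0

theorem halfTurn_mul_self {K : Type} [Field K] (v : Fin 3 → K) (hv : nrm v ≠ 0) :
    halfTurn v * halfTurn v = 1 := by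
  have h : symSq (v 1) (v 2) (-v 0) (-v 1) * symSq (v 1) (v 2) (-v 0) (-v 1)
      = (nrm v)^2 • (1 : Matrix (Fin 3) (Fin 3) K) := by
    rw [symSq_mul, ← symSq_one, smul_symSq]
    ext i j
    fin_cases i <;> fin_cases j <;> simp [symSq, nrm] <;> ring_nf <;> simp
  rw [halfTurn, smul_mul_smul_comm, h, smul_smul]
  rw [show (nrm v)⁻¹ * (nrm v)⁻¹ * nrm v ^ 2 = 1 by field_simp, one_smul]

theorem vecMul_halfTurn {K : Type} [Field K] (v w : Fin 3 → K) (hv : nrm v ≠ 0) :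
    Matrix.vecMul w (halfTurn v) = ((nrm v)⁻¹ * bil v w) • v - w := by
  ext i
  fin_cases i <;>
    simp [halfTurn, symSq, bil, Matrix.vecMul, dotProduct, Fin.sum_univ_three] <;>
    field_simp <;> simp only [nrm] <;> ring

/-- The matrices `P` and `R` of orthogonal points anticommute, and `symSq` does not see the sign. -/
theorem halfTurn_comm {K : Type} [Field K] (v w : Fin 3 → K) (h : bil v w = 0) :
    halfTurn v * halfTurn w = halfTurn w * halfTurn v := by
  rw [halfTurn, halfTurn, smul_mul_smul_comm, smul_mul_smul_comm, mul_comm (nrm w)⁻¹]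
  congr 1
  rw [symSq_mul, symSq_mul]
  have key : ∀ a b c d a' b' c' d' : K, a = -a' → b = -b' → c = -c' → d = -d' →
      symSq a b c d = symSq a' b' c' d' := by
    rintro _ _ _ _ a' b' c' d' rfl rfl rfl rfl
    simp [symSq]
  simp only [bil] at h
  apply key
  · linear_combination -h
  · ring
  · ring
  · linear_combination -h

/-! ### Conjugation by half-turns -/

/-- Conjugation by a half-turn. -/
def conj {K : Type} [Field K] (v : Fin 3 → K) (M : Matrix (Fin 3) (Fin 3) K) :
    Matrix (Fin 3) (Fin 3) K := halfTurn v * M * halfTurn v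

theorem conj_symSq {K : Type} [Field K] (v : Fin 3 → K) (a b c d : K) :
    conj v (symSq a b c d) =
      symSq ((nrm v)⁻¹ * ((v 1 * a + v 2 * c) * v 1 + (v 1 * b + v 2 * d) * -v 0))
        ((nrm v)⁻¹ * ((v 1 * a + v 2 * c) * v 2 + (v 1 * b + v 2 * d) * -v 1))
        ((nrm v)⁻¹ * ((-v 0 * a + -v 1 * c) * v 1 + (-v 0 * b + -v 1 * d) * -v 0))
        ((nrm v)⁻¹ * ((-v 0 * a + -v 1 * c) * v 2 + (-v 0 * b + -v 1 * d) * -v 1)) := by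
  rw [← smul_symSq, ← symSq_mul, ← symSq_mul, conj, halfTurn, Matrix.smul_mul,
    Matrix.smul_mul, Matrix.mul_smul, smul_smul, pow_two]

theorem conj_conj {K : Type} [Field K] (v : Fin 3 → K) (hv : nrm v ≠ 0)
    (M : Matrix (Fin 3) (Fin 3) K) : conj v (conj v M) = M := by
  have h := halfTurn_mul_self v hv
  calc conj v (conj v M) = (halfTurn v * halfTurn v) * M * (halfTurn v * halfTurn v) := by
        simp only [conj, mul_assoc]
    _ = M := by rw [h, one_mul, mul_one]

theorem conj_comm {K : Type} [Field K] (v w : Fin 3 → K) (h : bil v w = 0)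
    (M : Matrix (Fin 3) (Fin 3) K) : conj v (conj w M) = conj w (conj v M) := by
  have h' := halfTurn_comm v w h
  calc conj v (conj w M) = (halfTurn v * halfTurn w) * M * (halfTurn w * halfTurn v) := by
        simp only [conj, mul_assoc]
    _ = (halfTurn w * halfTurn v) * M * (halfTurn v * halfTurn w) := by rw [h']
    _ = _ := by simp only [conj, mul_assoc]

theorem conj_one {K : Type} [Field K] (v : Fin 3 → K) (hv : nrm v ≠ 0) : conj v 1 = 1 := by
  rw [conj, mul_one, halfTurn_mul_self v hv]

theorem trace_conj {K : Type} [Field K] (v : Fin 3 → K) (hv : nrm v ≠ 0)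
    (M : Matrix (Fin 3) (Fin 3) K) : (conj v M).trace = M.trace := by
  rw [conj, Matrix.trace_mul_comm, ← mul_assoc, halfTurn_mul_self v hv, one_mul]

theorem conj_inv {K : Type} [Field K] (v : Fin 3 → K) (hv : nrm v ≠ 0)
    (M : Matrix (Fin 3) (Fin 3) K) : (conj v M)⁻¹ = conj v M⁻¹ := by
  have h : (halfTurn v)⁻¹ = halfTurn v := Matrix.inv_eq_left_inv (halfTurn_mul_self v hv)
  rw [conj, Matrix.mul_inv_rev, Matrix.mul_inv_rev, h, conj, mul_assoc]

theorem conj_mem_Hset {K : Type} [Field K] [Fintype K] (v : Fin 3 → K) (hv : nrm v ≠ 0)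
    (M : Matrix (Fin 3) (Fin 3) K) (hM : M ∈ Hset K) : conj v M ∈ Hset K := by
  obtain ⟨a, b, c, d, h, rfl⟩ := hM
  refine ⟨_, _, _, _, ?_, conj_symSq v a b c d⟩
  field_simp
  simp only [nrm]
  linear_combination (v 0 * v 2 - v 1 ^ 2)^2 * h

/-! ### Common fixed points of the two conjugations -/

/-- If `symSq g` is fixed by the conjugation with the half-turn about `v`, and `tr g ≠ 0`, then `g`
commutes with the matrix `[v1 v2; -v0 -v1]` of `v`; the three conclusions are the entries of that
commutation relation. -/
theorem commute_of_fixed {K : Type} [Field K] (h2 : (2 : K) ≠ 0) (v : Fin 3 → K)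
    (hv : nrm v ≠ 0) (a b c d : K) (hdet : a * d - b * c = 1) (ht : a + d ≠ 0)
    (hfix : conj v (symSq a b c d) = symSq a b c d) :
    b * v 0 + c * v 2 = 0 ∧ (a - d) * v 2 = 2 * v 1 * b ∧ (a - d) * v 0 = -2 * v 1 * c := by
  rw [conj_symSq] at hfix
  set a' := (nrm v)⁻¹ * ((v 1 * a + v 2 * c) * v 1 + (v 1 * b + v 2 * d) * -v 0) with ha
  set b' := (nrm v)⁻¹ * ((v 1 * a + v 2 * c) * v 2 + (v 1 * b + v 2 * d) * -v 1) with hb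
  set c' := (nrm v)⁻¹ * ((-v 0 * a + -v 1 * c) * v 1 + (-v 0 * b + -v 1 * d) * -v 0) with hc
  set d' := (nrm v)⁻¹ * ((-v 0 * a + -v 1 * c) * v 2 + (-v 0 * b + -v 1 * d) * -v 1) with hd
  have hdet' : a' * d' - b' * c' = 1 := by
    rw [ha, hb, hc, hd]
    field_simp
    simp only [nrm]
    linear_combination (v 0 * v 2 - v 1 ^ 2)^2 * hdet
  have htr : a' + d' = -(a + d) := by
    rw [ha, hd]
    field_simp
    simp only [nrm]
    ring
  clear_value a' b' c' d'
  have e00 : a'^2 = a^2 := by simpa [symSq] using congrFun (congrFun hfix 0) 0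
  have e01 : a'*b' = a*b := by simpa [symSq] using congrFun (congrFun hfix 0) 1
  have e11 : a'*d' + b'*c' = a*d + b*c := by simpa [symSq] using congrFun (congrFun hfix 1) 1
  have e10 : 2*a'*c' = 2*a*c := by simpa [symSq] using congrFun (congrFun hfix 1) 0
  have e12 : 2*b'*d' = 2*b*d := by simpa [symSq] using congrFun (congrFun hfix 1) 2
  have e21 : c'*d' = c*d := by simpa [symSq] using congrFun (congrFun hfix 2) 1
  have e22 : d'^2 = d^2 := by simpa [symSq] using congrFun (congrFun hfix 2) 2
  have ead : a'*d' = a*d := by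
    apply mul_left_cancel₀ h2
    linear_combination e11 + hdet' - hdet
  have eac : a'*c' = a*c := by apply mul_left_cancel₀ h2; linear_combination e10
  have ebd : b'*d' = b*d := by apply mul_left_cancel₀ h2; linear_combination e12
  -- The entries of `(tr g) g` are determined by `symSq g`, and the trace changes sign.
  have fa : a' = -a := by
    apply mul_left_cancel₀ ht
    linear_combination a' * htr - e00 - ead
  have fb : b' = -b := by
    apply mul_left_cancel₀ ht
    linear_combination b' * htr - e01 - ebd
  have fc : c' = -c := by
    apply mul_left_cancel₀ ht
    linear_combination c' * htr - eac - e21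
  have fd : d' = -d := by
    apply mul_left_cancel₀ ht
    linear_combination d' * htr - ead - e22
  have cancel : ∀ t u : K, -t = (nrm v)⁻¹ * u → u + nrm v * t = 0 := by
    intro t u h
    field_simp at h
    linear_combination -h
  -- The entries of `P g P + N g = 0`, to be multiplied by `P` from the left.
  have E00 := cancel _ _ (fa.symm.trans ha)
  have E01 := cancel _ _ (fb.symm.trans hb)
  have E10 := cancel _ _ (fc.symm.trans hc)
  have E11 := cancel _ _ (fd.symm.trans hd)
  refine ⟨?_, ?_, ?_⟩ <;> apply mul_left_cancel₀ hv <;> simp only [nrm] at *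
  · linear_combination v 1 * E00 + v 2 * E10
  · linear_combination -v 1 * E01 - v 2 * E11
  · linear_combination v 0 * E00 + v 1 * E10

/-- An element `symSq g` of `H` with `T = (tr g)² ≠ 0` fixed by the conjugations with the half-turns
about two orthogonal points is the identity. -/
theorem eq_one_of_fixed {K : Type} [Field K] [Fintype K] (h2 : (2 : K) ≠ 0) (v w : Fin 3 → K)
    (hv : nrm v ≠ 0) (hw : nrm w ≠ 0) (hvw : bil v w = 0)
    (M : Matrix (Fin 3) (Fin 3) K) (hM : M ∈ Hset K) (hT : M.trace + 1 ≠ 0)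
    (hfv : conj v M = M) (hfw : conj w M = M) : M = 1 := by
  obtain ⟨a, b, c, d, h, rfl⟩ := hM
  have ht : a + d ≠ 0 := by
    intro h0
    apply hT
    rw [Matrix.trace_fin_three]
    simp
    linear_combination (a + d) * h0 - h
  obtain ⟨v1, v2, v3⟩ := commute_of_fixed h2 v hv a b c d h ht hfv
  obtain ⟨w1, w2, w3⟩ := commute_of_fixed h2 w hw a b c d h ht hfw
  -- With `n = (-c, (a - d) / 2, b)`, commutation with the matrix of `v` gives
  -- `2 (nrm v) n = (bil v n) v`. Pairing this with `w` shows `n ⊥ w`, and then `n = 0`.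
  have gamma : -c * w 2 - (a - d) * w 1 + b * w 0 = 0 := by
    apply mul_left_cancel₀ (mul_ne_zero h2 hv)
    simp only [bil] at hvw
    simp only [nrm]
    linear_combination (-c * v 2 - (a - d) * v 1 + b * v 0) * hvw
      - w 2 * (v 0 * v1 - v 1 * v3) - 2 * w 1 * (v 0 * v2 + v 1 * v1)
      + w 0 * (v 2 * v1 + v 1 * v2)
  have hc : c = 0 := by
    apply mul_left_cancel₀ (mul_ne_zero h2 hw)
    simp only [nrm]
    linear_combination w 0 * w1 - w 1 * w3 - w 0 * gamma
  have hb : b = 0 := by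
    apply mul_left_cancel₀ (mul_ne_zero h2 hw)
    simp only [nrm]
    linear_combination w 2 * w1 + w 1 * w2 + w 2 * gamma
  have had : a = d := by
    apply mul_left_cancel₀ hw
    simp only [nrm]
    linear_combination w 0 * w2 + w 1 * w1 + w 1 * gamma
  subst hc hb had
  have haa : a ^ 2 = 1 := by linear_combination h
  ext i j
  fin_cases i <;> fin_cases j <;> simp [haa, ← pow_two]

/-! ### Parity of the counts -/

theorem bil_halfTurn {K : Type} [Field K] (u v w : Fin 3 → K) (hv : nrm v ≠ 0) :
    bil u (Matrix.vecMul w (halfTurn v)) = (nrm v)⁻¹ * bil v w * bil u v - bil u w := by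
  rw [vecMul_halfTurn v w hv]
  simp [bil]
  ring

theorem bil_self {K : Type} [Field K] (v : Fin 3 → K) : bil v v = 2 * nrm v := by
  simp only [bil, nrm]; ring

/-- For `v ⊥ w`, conjugation by either half-turn changes the pairing of `v` with `w M` by a sign. -/
theorem bil_conj {K : Type} [Field K] (v w : Fin 3 → K) (hv : nrm v ≠ 0) (hw : nrm w ≠ 0)
    (hvw : bil v w = 0) (M : Matrix (Fin 3) (Fin 3) K) :
    bil v (Matrix.vecMul w (conj v M)) = -bil v (Matrix.vecMul w M) ∧
    bil v (Matrix.vecMul w (conj w M)) = -bil v (Matrix.vecMul w M) := by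
  have neg : ∀ x : Fin 3 → K, bil v (-x) = -bil v x := by
    intro x; simp [bil]; ring
  constructor
  · rw [conj, ← Matrix.vecMul_vecMul, ← Matrix.vecMul_vecMul, bil_halfTurn _ _ _ hv,
      vecMul_halfTurn v w hv, hvw, bil_self]
    simp only [mul_zero, zero_smul, zero_sub, Matrix.neg_vecMul, neg]
    field_simp
    ring
  · have hww : Matrix.vecMul w (halfTurn w) = w := by
      rw [vecMul_halfTurn w w hw, bil_self, show (nrm w)⁻¹ * (2 * nrm w) = 2 by field_simp,
        two_smul, add_sub_cancel_right]
    rw [conj, ← Matrix.vecMul_vecMul, ← Matrix.vecMul_vecMul, bil_halfTurn _ _ _ hw, hww, hvw]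
    ring

/-- `H_{p,r} ∩ C` is even for every set `C` of nonidentity elements of `H` with `T ≠ 0` which is
stable under conjugation by the half-turns. -/
theorem even_inter {K : Type} [Field K] [Fintype K] (h2 : (2 : K) ≠ 0) (p r : Pt K)
    (hp : nrm p.rep ≠ 0) (hr : nrm r.rep ≠ 0) (hpr : bil p.rep r.rep = 0)
    (C : Set (Matrix (Fin 3) (Fin 3) K))
    (hC : ∀ v : Fin 3 → K, nrm v ≠ 0 → ∀ M ∈ C, conj v M ∈ C)
    (hC0 : ∀ M ∈ C, M.trace + 1 ≠ 0) (hC1 : ∀ M ∈ C, M ≠ 1) :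
    Even (HprSet K p r ∩ C).ncard := by
  refine even_ncard_of_two_involutions _ (conj p.rep) (conj r.rep) (conj_conj _ hp)
    (conj_conj _ hr) (conj_comm _ _ hpr) ?_ ?_ ?_
  · rintro M ⟨⟨hM, h⟩, hMC⟩
    refine ⟨⟨conj_mem_Hset _ hp M hM, ?_⟩, hC _ hp M hMC⟩
    have h' : bil p.rep (Matrix.vecMul r.rep M⁻¹) = 0 := h
    change bil p.rep (Matrix.vecMul r.rep (conj p.rep M)⁻¹) = 0
    rw [conj_inv _ hp, (bil_conj _ _ hp hr hpr _).1, h', neg_zero]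
  · rintro M ⟨⟨hM, h⟩, hMC⟩
    refine ⟨⟨conj_mem_Hset _ hr M hM, ?_⟩, hC _ hr M hMC⟩
    have h' : bil p.rep (Matrix.vecMul r.rep M⁻¹) = 0 := h
    change bil p.rep (Matrix.vecMul r.rep (conj r.rep M)⁻¹) = 0
    rw [conj_inv _ hr, (bil_conj _ _ hp hr hpr _).2, h', neg_zero]
  · rintro M ⟨⟨hM, -⟩, hMC⟩ h3 h4
    exact hC1 M hMC (eq_one_of_fixed h2 _ _ hp hr hpr M hM (hC0 M hMC) h3 h4)

theorem nrm_ne_zero {K : Type} [Field K] [Fintype K] {p : Pt K} (hp : Internal K p) :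
    nrm p.rep ≠ 0 := by
  intro h
  apply hp
  have : Qf K p.rep = 0 := by
    simp only [nrm] at h
    simp only [Qf]
    linear_combination -h
  rw [this]
  exact IsSquare.zero

theorem conj_mem_classOf {K : Type} [Field K] [Fintype K] (s : K) (v : Fin 3 → K)
    (hv : nrm v ≠ 0) (M : Matrix (Fin 3) (Fin 3) K) (hM : M ∈ classOf K s) :
    conj v M ∈ classOf K s :=
  ⟨conj_mem_Hset v hv M hM.1, by rw [trace_conj v hv]; exact hM.2⟩

theorem trace_one_add_one {K : Type} [Field K] :
    (1 : Matrix (Fin 3) (Fin 3) K).trace + 1 = 4 := by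
  rw [Matrix.trace_fin_three]
  simp
  norm_num

/-- `q ≡ 1 (mod 4)`, `p ≠ r` internal with `r` on `p^⊥`: `|H_{p,r} ∩ {1}| = 1`
and `|H_{p,r} ∩ C|` is even for `C = [4]`, every `[θ]` and every `[π]`. -/
theorem Hpr_parity_perp_one (h1 : Fintype.card K % 4 = 1) (p r : Pt K)
    (hp : Internal K p) (hr : Internal K r) (hne : p ≠ r)
    (hperp : OnPerp K p r) :
    (HprSet K p r ∩ {1}).ncard = 1 ∧
    Even ((HprSet K p r ∩ class4 K).ncard) ∧
    (∀ θ : K, θ ≠ 0 → IsSquare θ → θ ≠ 4 → θ - 4 ≠ 0 → IsSquare (θ - 4) →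
      Even ((HprSet K p r ∩ classOf K θ).ncard)) ∧
    (∀ π : K, π ≠ 0 → IsSquare π → π ≠ 4 → Nonsq K (π - 4) →
      Even ((HprSet K p r ∩ classOf K π).ncard)) := by
  have h2 : (2 : K) ≠ 0 := by
    apply Ring.two_ne_zero
    intro hchar
    have := FiniteField.even_card_of_char_two hchar
    omega
  have h4 : (4 : K) ≠ 0 := by
    have h := mul_ne_zero h2 h2
    norm_num at h ⊢
    exact h
  have hp' := nrm_ne_zero hp
  have hr' := nrm_ne_zero hr
  have hpr : bil p.rep r.rep = 0 := hperp
  have main : ∀ s : K, s ≠ 0 → s ≠ 4 → Even ((HprSet K p r ∩ classOf K s).ncard) := by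
    intro s hs0 hs4
    refine even_inter h2 p r hp' hr' hpr _ (conj_mem_classOf s) ?_ ?_
    · rintro M ⟨-, hM⟩
      rwa [hM]
    · rintro M ⟨-, hM⟩ rfl
      exact hs4 (hM.symm.trans trace_one_add_one)
  refine ⟨?_, ?_, fun θ h0 _ hθ _ _ => main θ h0 hθ, fun π h0 _ hπ _ => main π h0 hπ⟩
  · have h1mem : (1 : Matrix (Fin 3) (Fin 3) K) ∈ HprSet K p r := by
      refine ⟨⟨1, 0, 0, 1, by ring, symSq_one.symm⟩, ?_⟩
      rw [inv_one, Matrix.vecMul_one]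
      exact hperp
    rw [Set.inter_eq_right.mpr (Set.singleton_subset_iff.mpr h1mem), Set.ncard_singleton]
  · refine even_inter h2 p r hp' hr' hpr _ ?_ ?_ ?_
    · rintro v hv M ⟨hM, hT, hne1⟩
      refine ⟨conj_mem_Hset v hv M hM, by rw [trace_conj v hv]; exact hT, fun h => hne1 ?_⟩
      rw [← conj_conj v hv M, h, conj_one v hv]
    · rintro M ⟨-, hM, -⟩
      rwa [hM]
    · rintro M ⟨-, -, hM⟩
      exact hM

end ConicPaper
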